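/- Let Q be a quiver, P the path algebra of its double Q̄ over k, and L = P/[P,P] the necklace Lie coalgebra with cobracket δ_or. The k-linear map η_or : L → T_or(Φ_or) defined by η_or([a₁⋯aₙ]) = Σ_{cuts H of [a₁⋯aₙ]} (T_{H,or}, s_{H,or}) is an injective homomorphism of Lie coalgebras from (L, δ_or) to (T_or(Φ_or), ρ^ss_O). -/

import Mathlib

/-!
Statement 11: for a quiver `Q`, the map
`η_or([a₁⋯aₙ]) = Σ_{cuts H} (T_{H,or}, s_{H,or})` (where `(T_{H,or}, s_{H,or})` is the
dual decorated oriented tree of the chord diagram of the cut `H`) is an injective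
homomorphism of Lie coalgebras from the necklace Lie coalgebra `(L, δ_or)` to
`(T_or(Φ_or), ρ^ss_O)`.
-/

open TensorProduct

noncomputable section

/-! ### Quivers, double quivers and paths

A quiver `Q` is given by a vertex type `I`, an arrow type `E`, and source/target maps
`s t : E → I`. -/

/-- The arrows of the double quiver `Q̄ = Q ⊔ Q*`: `.inl e = e` and `.inr e = e*`. -/
abbrev Arr (E : Type*) := E ⊕ E

/-- The involution `a ↦ a*` on arrows of the double quiver (with `(e*)* = e`). -/
def astar {E : Type*} : Arr E → Arr E
  | .inl e => .inr e
  | .inr e => .inl e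

/-- The source `a_s` of an arrow of the double quiver. -/
def asrc {I E : Type*} (s t : E → I) : Arr E → I
  | .inl e => s e
  | .inr e => t e

/-- The target `a_t` of an arrow of the double quiver. -/
def atgt {I E : Type*} (s t : E → I) : Arr E → I
  | .inl e => t e
  | .inr e => s e

open scoped Classical in
/-- The pairing `ω`: `ω(e,e*) = 1`, `ω(e*,e) = −1` for `e ∈ Q`, and `ω(a,b) = 0`
whenever `b ≠ a*`. -/
def omg (k : Type*) [CommRing k] {E : Type*} : Arr E → Arr E → k
  | .inl e, .inr e' => if e = e' then 1 else 0
  | .inr e, .inl e' => if e = e' then -1 else 0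
  | _, _ => 0

/-- `IsPathFrom s t v l`: `l` is a composable sequence of arrows starting at `v`. -/
def IsPathFrom {I E : Type*} (s t : E → I) : I → List (Arr E) → Prop
  | _, [] => True
  | v, a :: l => asrc s t a = v ∧ IsPathFrom s t (atgt s t a) l

/-- The target of a path. -/
def pathTgt {I E : Type*} (s t : E → I) : I → List (Arr E) → I
  | v, [] => v
  | _, a :: l => pathTgt s t (atgt s t a) l

/-- A path in the double quiver `Q̄`. -/
structure QPath {I E : Type*} (s t : E → I) : Type _ where
  src : I
  arrows : List (Arr E)
  valid : IsPathFrom s t src arrows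

/-! ### Cuts of paths -/

/-- A cut of a path with arrow list `l` (0-indexed): a set `H` of pairs `(i,j)` of
positions such that all the involved positions are distinct, `i < j` for each pair, the
pairs do not cross, and for each pair `{a_i, a_j} = {e, e*}` for some arrow `e ∈ Q`. -/
def IsCut {E : Type*} (l : List (Arr E)) (H : Finset (ℕ × ℕ)) : Prop :=
  (∀ c ∈ H, c.1 < c.2 ∧ c.2 < l.length ∧
    ∃ e : E, (l[c.1]? = some (.inl e) ∧ l[c.2]? = some (.inr e)) ∨
             (l[c.1]? = some (.inr e) ∧ l[c.2]? = some (.inl e))) ∧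
  (∀ c ∈ H, ∀ c' ∈ H, c ≠ c' →
    c.1 ≠ c'.1 ∧ c.1 ≠ c'.2 ∧ c.2 ≠ c'.1 ∧ c.2 ≠ c'.2) ∧
  ¬ ∃ c ∈ H, ∃ c' ∈ H, c.1 < c'.1 ∧ c'.1 < c.2 ∧ c.2 < c'.2

/-- No pair of a cut is nested inside another: together with `IsCut` this defines
simple cuts of paths. -/
def NoNest (H : Finset (ℕ × ℕ)) : Prop :=
  ¬ ∃ c ∈ H, ∃ c' ∈ H, c.1 < c'.1 ∧ c'.2 < c.2

/-- A simple cut of a path: a cut in which no pair is nested inside another. -/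
def IsSimpleCut {E : Type*} (l : List (Arr E)) (H : Finset (ℕ × ℕ)) : Prop :=
  IsCut l H ∧ NoNest H

/-- The sign `ε` contributed by one pair of a cut: `−ω(a_i, a_j)`. -/
def epsFactor (k : Type*) [CommRing k] {E : Type*} (l : List (Arr E)) (c : ℕ × ℕ) : k :=
  match l[c.1]?, l[c.2]? with
  | some a, some b => -(omg k a b)
  | _, _ => 0

/-- The sign `ε_H = ∏_ℓ (−ω(a_{i_ℓ}, a_{j_ℓ}))` of a cut. -/
def epsH (k : Type*) [CommRing k] {E : Type*} (l : List (Arr E)) (H : Finset (ℕ × ℕ)) :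
    k := ∏ c ∈ H, epsFactor k l c

/-- The chords of `H` lying strictly inside the chord `(i,j)`, reindexed along the path
`a_{i+1} ⋯ a_{j−1}`. -/
def insideCut (H : Finset (ℕ × ℕ)) (i j : ℕ) : Finset (ℕ × ℕ) :=
  (H.filter (fun c' => i < c'.1 ∧ c'.2 < j)).image
    (fun c' => (c'.1 - (i+1), c'.2 - (i+1)))

/-- The chords of `H` other than `(i,j)` not lying inside the chord `(i,j)`, reindexed
along the path `a₁ ⋯ a_{i−1} a_{j+1} ⋯ a_n`. -/
def outsideCut (H : Finset (ℕ × ℕ)) (i j : ℕ) : Finset (ℕ × ℕ) :=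
  ((H.erase (i, j)).filter (fun c' => ¬ (i < c'.1 ∧ c'.2 < j))).image
    (fun c' => (if j < c'.1 then c'.1 - (j - i + 1) else c'.1,
                if j < c'.2 then c'.2 - (j - i + 1) else c'.2))

/-- A closed path in the double quiver. -/
structure ClosedQPath {I E : Type*} (s t : E → I) : Type _ where
  path : QPath s t
  closed : pathTgt s t path.src path.arrows = path.src

/-- Rotation of closed paths (moving the initial edge): the equivalence closure of this
relation identifies exactly the closed paths giving the same cyclic path (necklace). -/
def RotRel {I E : Type*} (s t : E → I) (p q : ClosedQPath s t) : Prop :=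
  ∃ (a : Arr E) (l : List (Arr E)),
    p.path.arrows = a :: l ∧ q.path.arrows = l ++ [a] ∧ q.path.src = atgt s t a

/-- Necklaces: cyclic paths in the double quiver, i.e. closed paths up to rotation. -/
def Necklace {I E : Type*} (s t : E → I) : Type _ := Quot (RotRel s t)

open scoped Classical in
/-- The necklace with basepoint `v` and arrows `l`, or the trivial necklace at `v` if
the data is not a closed path. -/
def mkNk {I E : Type*} (s t : E → I) (v : I) (l : List (Arr E)) : Necklace s t :=
  if h : IsPathFrom s t v l ∧ pathTgt s t v l = v then
    Quot.mk (RotRel s t) ⟨⟨v, l, h.1⟩, h.2⟩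
  else Quot.mk (RotRel s t) ⟨⟨v, [], trivial⟩, rfl⟩

/-! ### Decorated oriented trees: the oriented tree-structure `Φ_or`

`Φ_or` attaches to an oriented tree a ribbon graph structure and a labeling of every
vertex by a cyclic path (necklace) in `Q̄`.  A pair `(T,s)` is represented by a planar
rooted tree whose vertices carry necklace labels and whose edges carry their orientation
flag (`true` = oriented from parent to child); the auxiliary root, the corner at the
root, and the planar representation of the cyclic orders are forgotten by passing to the
quotient `ODT` below. -/

/-- Planar rooted representations of oriented trees decorated by `Φ_or`. -/
inductive ODTree {I E : Type*} (s t : E → I) : Type _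
  | node : Necklace s t → List (Bool × ODTree s t) → ODTree s t

/-- Generating relation identifying representations of the same decorated oriented
tree: rotating the (cyclic) order of the edges at the root, and moving the root along an
edge.  Its equivalence closure identifies exactly the representations with isomorphic
underlying decorated oriented trees. -/
inductive ODTree.Rel {I E : Type*} {s t : E → I} : ODTree s t → ODTree s t → Prop
  | rot {x : Necklace s t} {c : Bool × ODTree s t} {cs : List (Bool × ODTree s t)} :
      ODTree.Rel (.node x (c :: cs)) (.node x (cs ++ [c]))
  | reroot {x y : Necklace s t} {b : Bool} {ls ts : List (Bool × ODTree s t)} :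
      ODTree.Rel (.node x ((b, .node y ls) :: ts)) (.node y (ls ++ [(!b, .node x ts)]))

/-- `T_or(Φ_or)`-basis: isomorphism classes of pairs `(T,s)` with `T` an oriented tree
and `s ∈ Φ_or(T)`. -/
def ODT {I E : Type*} (s t : E → I) : Type _ := Quot (@ODTree.Rel I E s t)

section ODTreeOps

variable {I E : Type*} {s t : E → I}

mutual
/-- All one-edge cuts of a decorated oriented tree: for each edge `e`, the triple
`(b, A, B)` where `b` is the orientation flag of `e` (`true` iff `e` points away from
the root side), `A` is the component away from the root and `B` the component containing
the root, with restricted decorations. -/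
def ODTree.cuts : ODTree s t → List (Bool × ODTree s t × ODTree s t)
  | .node x l => (ODTree.cutsL l).map (fun p => (p.1, p.2.1, .node x p.2.2))
/-- Auxiliary to `ODTree.cuts`. -/
def ODTree.cutsL : List (Bool × ODTree s t) →
    List (Bool × ODTree s t × List (Bool × ODTree s t))
  | [] => []
  | (b, u) :: ts =>
      ((b, u, ts) :: (ODTree.cuts u).map (fun p => (p.1, p.2.1, (b, p.2.2) :: ts)))
        ++ (ODTree.cutsL ts).map (fun p => (p.1, p.2.1, (b, u) :: p.2.2))
end

end ODTreeOps

open scoped Classical in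
/-- The dual decorated oriented tree of the chord diagram of a cut `H` of a necklace
(presented by a closed path with arrow list `l`), built recursively face by face, with
necklace labels; cf. `buildT`. -/
def buildOT {I E : Type*} (s t : E → I) (l : List (Arr E)) :
    ℕ → List (ℕ × ℕ) → ℕ → ℕ → I → ODTree s t
  | 0, _, _, _, v => .node (mkNk s t v []) []
  | fuel+1, H, lo, hi, v =>
      let outer : List (ℕ × ℕ) := (List.range l.length).filterMap (fun i =>
        match H.find? (fun c => c.1 == i) with
        | some c => if lo ≤ c.1 ∧ c.2 < hi ∧
            ¬ (H.any (fun c' =>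
              decide (c' ≠ c ∧ lo ≤ c'.1 ∧ c'.1 < c.1 ∧ c.2 < c'.2 ∧ c'.2 < hi)))
            then some c else none
        | none => none)
      let lbl : List (Arr E) := (List.range l.length).filterMap (fun m =>
        if lo ≤ m ∧ m < hi ∧ ¬ outer.any (fun c => decide (c.1 ≤ m ∧ m ≤ c.2))
        then l[m]? else none)
      .node (mkNk s t v lbl)
        (outer.map (fun c =>
          ((match l[c.1]? with | some (.inl _) => true | _ => false),
           buildOT s t l fuel
             (H.filter (fun c' => decide (c.1 < c'.1 ∧ c'.2 < c.2)))
             (c.1+1) c.2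
             (match l[c.1]? with | some a => atgt s t a | none => v))))

open scoped Classical

/-- The sum of a list of elements of an additive commutative monoid. -/
def lsum {M : Type*} [AddCommMonoid M] (l : List M) : M := l.foldr (· + ·) 0

/-- The finset of all cuts of the list of arrows `l`. -/
def allCuts {E : Type*} (l : List (Arr E)) : Finset (Finset (ℕ × ℕ)) :=
  ((Finset.range l.length ×ˢ Finset.range l.length).powerset).filter
    (fun H => IsCut l H)

variable (k : Type*) [CommRing k] {I E : Type*} (s t : E → I)

/-- `L = P/[P,P]`: the free `k`-module with basis the necklaces in `Q̄`. -/
abbrev NeckMod := Necklace s t →₀ k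

/-- `T_or(Φ_or)`: the free `k`-module on the isomorphism classes of pairs `(T,s)` with
`T` an oriented tree and `s ∈ Φ_or(T)`. -/
abbrev ODMod := ODT s t →₀ k

/-- The basis vector of a necklace, or `0` if the data is not a closed path. -/
def mkN (v : I) (l : List (Arr E)) : NeckMod k s t :=
  if h : IsPathFrom s t v l ∧ pathTgt s t v l = v then
    Finsupp.single (Quot.mk (RotRel s t) ⟨⟨v, l, h.1⟩, h.2⟩) (1 : k) else 0

/-- The summand of `δ_or` for a pair of positions `i < j` of the cyclic path `(v, l)`. -/
def dorTerm (v : I) (l : List (Arr E)) (i j : ℕ) :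
    NeckMod k s t ⊗[k] NeckMod k s t :=
  match l[i]?, l[j]? with
  | some a, some b =>
      let inner := mkN k s t (atgt s t a) ((l.drop (i+1)).take (j - i - 1))
      let outer := mkN k s t (atgt s t b) (l.drop (j+1) ++ l.take i)
      omg k a b • (outer ⊗ₜ[k] inner - inner ⊗ₜ[k] outer)
  | _, _ => (0 : k) • (mkN k s t v [] ⊗ₜ[k] mkN k s t v [])

/-- The necklace Lie cobracket `δ_or` on `L`. -/
def deltaOr : NeckMod k s t →ₗ[k] NeckMod k s t ⊗[k] NeckMod k s t :=
  Finsupp.lift (NeckMod k s t ⊗[k] NeckMod k s t) k (Necklace s t) fun q =>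
    let p := q.out
    ∑ i ∈ Finset.range p.path.arrows.length, ∑ j ∈ Finset.range p.path.arrows.length,
      if i < j then dorTerm k s t p.path.src p.path.arrows i j
      else (0 : k) • dorTerm k s t p.path.src p.path.arrows i j

/-- The Lie cobracket
`ρ^ss_O((T,s)) = Σ_{e∈E(T)} ((T_e^1,s|) ⊗ (T_e^2,s|) − (T_e^2,s|) ⊗ (T_e^1,s|))` on
`T_or(Φ_or)`, `T_e^2` being the component `e` points to (computed on a representative;
the result does not depend on the choice). -/
def rhoOD : ODMod k s t →ₗ[k] ODMod k s t ⊗[k] ODMod k s t :=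
  Finsupp.lift (ODMod k s t ⊗[k] ODMod k s t) k (ODT s t) fun q =>
    lsum ((ODTree.cuts q.out).map fun p =>
      let xA : ODMod k s t := Finsupp.single (Quot.mk ODTree.Rel p.2.1) (1 : k)
      let xB : ODMod k s t := Finsupp.single (Quot.mk ODTree.Rel p.2.2) (1 : k)
      let x1 : ODMod k s t := if p.1 then xB else xA
      let x2 : ODMod k s t := if p.1 then xA else xB
      x1 ⊗ₜ[k] x2 - x2 ⊗ₜ[k] x1)

/-- `η_or([a₁⋯aₙ]) = Σ_{cuts H} (T_{H,or}, s_{H,or})` (computed on a representative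
closed path; the result does not depend on the choice). -/
def etaOr : NeckMod k s t →ₗ[k] ODMod k s t :=
  Finsupp.lift (ODMod k s t) k (Necklace s t) fun q =>
    let p := q.out
    ∑ H ∈ allCuts p.path.arrows,
      Finsupp.single
        (Quot.mk ODTree.Rel
          (buildOT s t p.path.arrows (p.path.arrows.length + 1) H.toList 0
            p.path.arrows.length p.path.src)) (1 : k)

/-!
A cut of a word is a parse of it by the grammar `W → ε | a W | a W a* W`, and its dual tree can be
read off the parse. Moving the first letter of the word to its end carries cuts to cuts, and changes
the dual tree by a rotation of the necklace at the root when the letter is free, and by moving the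
root along the dual edge when it starts a chord. Hence `η_or` can be evaluated on every closed path
that represents a necklace.

An edge of the dual tree is a chord of the cut, and the two components left by removing it are dual
to the cuts induced on the two necklaces into which the chord divides the circle. Conversely, for
matched positions `i < j`, any two cuts of these necklaces glue along the chord `(i, j)`. So
`ρ (η w)` is the sum over the matched pairs of the products of the values of `η` on the two pieces,
the orientation of the dual edge accounting for the sign `ω(a_i, a_j)`, and this is `(η ⊗ η) (δ w)`.

Injectivity holds because only the empty cut has a one-vertex dual tree, and its label is the
necklace itself.
-/

/-! ### Arrows and closed paths -/

section Paths

@[simp] lemma astar_astar (a : Arr E) : astar (astar a) = a := by cases a <;> rfl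

@[simp] lemma asrc_astar (a : Arr E) : asrc s t (astar a) = atgt s t a := by cases a <;> rfl

@[simp] lemma atgt_astar (a : Arr E) : atgt s t (astar a) = asrc s t a := by cases a <;> rfl

@[simp] lemma isLeft_astar (a : Arr E) : (astar a).isLeft = !a.isLeft := by cases a <;> rfl

lemma exists_eq_astar_iff {o o' : Option (Arr E)} :
    (∃ e : E, (o = some (.inl e) ∧ o' = some (.inr e)) ∨
      (o = some (.inr e) ∧ o' = some (.inl e))) ↔
      ∃ a : Arr E, o = some a ∧ o' = some (astar a) := by
  simp only [Sum.exists, astar, exists_or]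

lemma omg_astar (a : Arr E) : omg k a (astar a) = if a.isLeft then 1 else -1 := by
  cases a <;> simp [omg, astar]

lemma omg_eq_zero {a b : Arr E} (h : b ≠ astar a) : omg k a b = 0 := by
  cases a <;> cases b <;> simp_all [omg, astar, eq_comm]

lemma isPathFrom_append (v : I) (l m : List (Arr E)) :
    IsPathFrom s t v (l ++ m) ↔ IsPathFrom s t v l ∧ IsPathFrom s t (pathTgt s t v l) m := by
  induction l generalizing v with
  | nil => simp [IsPathFrom, pathTgt]
  | cons a l ih => simp [IsPathFrom, pathTgt, ih, and_assoc]

lemma pathTgt_append (v : I) (l m : List (Arr E)) :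
    pathTgt s t v (l ++ m) = pathTgt s t (pathTgt s t v l) m := by
  induction l generalizing v with
  | nil => rfl
  | cons a l ih => simp [pathTgt, ih]

/-- `l` is a closed path based at `v`: the condition under which `mkNk` and `mkN` are not junk. -/
def IsLoop (v : I) (l : List (Arr E)) : Prop :=
  IsPathFrom s t v l ∧ pathTgt s t v l = v

variable {s t}

lemma IsLoop.append_comm {v : I} {l m : List (Arr E)} (h : IsLoop s t v (l ++ m)) :
    IsLoop s t (pathTgt s t v l) (m ++ l) := by
  obtain ⟨hpath, hclosed⟩ := h
  rw [isPathFrom_append] at hpath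
  rw [pathTgt_append] at hclosed
  exact ⟨by rw [isPathFrom_append, hclosed]; exact hpath.symm, by rw [pathTgt_append, hclosed]⟩

lemma IsLoop.rotate {v : I} {a : Arr E} {l : List (Arr E)} (h : IsLoop s t v (a :: l)) :
    IsLoop s t (atgt s t a) (l ++ [a]) :=
  h.append_comm (l := [a])

lemma isLoop_append_cons_append_cons_iff {v : I} {a : Arr E} {l₁ l₂ l₃ : List (Arr E)} :
    IsLoop s t v (l₁ ++ a :: (l₂ ++ astar a :: l₃)) ↔
      IsLoop s t v (l₁ ++ l₃) ∧ IsLoop s t (atgt s t a) l₂ ∧ pathTgt s t v l₁ = asrc s t a := by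
  simp only [IsLoop, isPathFrom_append, pathTgt_append, IsPathFrom, pathTgt, asrc_astar,
    atgt_astar]
  constructor
  · rintro ⟨⟨h₁, ha, h₂, ha', h₃⟩, hv⟩
    rw [← ha]
    exact ⟨⟨⟨h₁, h₃⟩, hv⟩, ⟨h₂, ha'.symm⟩, rfl⟩
  · rintro ⟨⟨⟨h₁, h₃⟩, hv⟩, ⟨h₂, ha'⟩, ha⟩
    rw [ha] at h₃ hv
    exact ⟨⟨h₁, ha.symm, h₂, ha'.symm, h₃⟩, hv⟩

lemma mkNk_of_isLoop {v : I} {l : List (Arr E)} (h : IsLoop s t v l) :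
    mkNk s t v l = Quot.mk (RotRel s t) ⟨⟨v, l, h.1⟩, h.2⟩ := dif_pos h

lemma exists_isLoop_eq_mkNk (q : Necklace s t) : ∃ v l, IsLoop s t v l ∧ q = mkNk s t v l := by
  obtain ⟨p, rfl⟩ := Quot.exists_rep q
  exact ⟨p.path.src, p.path.arrows, ⟨p.path.valid, p.closed⟩,
    (mkNk_of_isLoop ⟨p.path.valid, p.closed⟩).symm⟩

lemma mkN_of_isLoop {v : I} {l : List (Arr E)} (h : IsLoop s t v l) :
    mkN k s t v l = Finsupp.single (mkNk s t v l) 1 := by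
  rw [mkNk_of_isLoop h]
  exact dif_pos h

lemma mkNk_rotate {v : I} {a : Arr E} {l : List (Arr E)} (h : IsLoop s t v (a :: l)) :
    mkNk s t v (a :: l) = mkNk s t (atgt s t a) (l ++ [a]) := by
  rw [mkNk_of_isLoop h, mkNk_of_isLoop h.rotate]
  exact Quot.sound ⟨a, l, rfl, rfl, rfl⟩

end Paths

section Lists

variable {α β : Type*}

lemma cons_prefix_drop_iff {a : α} {l w : List α} {n : ℕ} :
    a :: l <+: w.drop n ↔ w[n]? = some a ∧ l <+: w.drop (n + 1) := by
  rcases lt_or_ge n w.length with h | h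
  · rw [← List.getElem_cons_drop h, List.cons_prefix_cons, List.getElem?_eq_getElem h,
      Option.some_inj, eq_comm]
  · simp [List.drop_eq_nil_of_le h, h]

lemma append_prefix_drop_iff {l m w : List α} {n : ℕ} :
    l ++ m <+: w.drop n ↔ l <+: w.drop n ∧ m <+: w.drop (n + l.length) := by
  induction l generalizing n with
  | nil => simp
  | cons a l ih =>
    rw [List.cons_append, cons_prefix_drop_iff, cons_prefix_drop_iff, ih, and_assoc,
      List.length_cons, Nat.add_right_comm, Nat.add_assoc]

lemma find?_eq_some_iff_of_injOn [DecidableEq β] {f : α → β} {l : List α}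
    (hf : Set.InjOn f {a | a ∈ l}) {a : α} {b : β} :
    l.find? (fun a => f a == b) = some a ↔ a ∈ l ∧ f a = b := by
  constructor
  · intro h
    exact ⟨List.mem_of_find?_eq_some h, by simpa using List.find?_some h⟩
  · rintro ⟨ha, rfl⟩
    obtain ⟨a', ha'⟩ := Option.isSome_iff_exists.1
      (List.find?_isSome (p := fun a' => f a' == f a) |>.2 ⟨a, ha, beq_self_eq_true (f a)⟩)
    have hfa : f a' = f a := by simpa using List.find?_some ha'
    rw [ha', hf (List.mem_of_find?_eq_some ha') ha hfa]

end Lists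

/-! ### Words with a cut -/

/-- A word in the arrows of the double quiver together with a cut of it, as a parse of the word by
the grammar `W → ε | a W | a W a* W`: the first arrow is incident to no chord in `free a F`, and
joined by a chord to the arrow `a*` between `G` and `F` in `chord a G F`. -/
inductive CutWord (E : Type*) : Type _
  | nil : CutWord E
  | free : Arr E → CutWord E → CutWord E
  | chord : Arr E → CutWord E → CutWord E → CutWord E

namespace CutWord

/-- The underlying word. -/
def toList : CutWord E → List (Arr E)
  | nil => []
  | free a F => a :: F.toList
  | chord a G F => a :: (G.toList ++ astar a :: F.toList)

/-- The chords of the cut, as pairs of positions, when the word starts at position `lo`. -/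
def chords : ℕ → CutWord E → Finset (ℕ × ℕ)
  | _, nil => ∅
  | lo, free _ F => F.chords (lo + 1)
  | lo, chord _ G F =>
      insert (lo, lo + 1 + G.toList.length)
        (G.chords (lo + 1) ∪ F.chords (lo + 2 + G.toList.length))

@[simp] lemma mem_chords_chord {a : Arr E} {G F : CutWord E} {lo : ℕ} {c : ℕ × ℕ} :
    c ∈ (chord a G F).chords lo ↔ c = (lo, lo + 1 + G.toList.length) ∨ c ∈ G.chords (lo + 1) ∨
      c ∈ F.chords (lo + 2 + G.toList.length) := by
  simp [chords]

lemma toList_free_prefix_drop_iff {a : Arr E} {F : CutWord E} {w : List (Arr E)} {lo : ℕ} :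
    (free a F).toList <+: w.drop lo ↔ w[lo]? = some a ∧ F.toList <+: w.drop (lo + 1) :=
  cons_prefix_drop_iff

lemma toList_chord_prefix_drop_iff {a : Arr E} {G F : CutWord E} {w : List (Arr E)} {lo : ℕ} :
    (chord a G F).toList <+: w.drop lo ↔
      w[lo]? = some a ∧ G.toList <+: w.drop (lo + 1) ∧
        w[lo + 1 + G.toList.length]? = some (astar a) ∧
          F.toList <+: w.drop (lo + 2 + G.toList.length) := by
  rw [toList, cons_prefix_drop_iff, append_prefix_drop_iff, cons_prefix_drop_iff,
    show lo + 1 + G.toList.length + 1 = lo + 2 + G.toList.length by omega]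

lemma chords_bounds {F : CutWord E} {lo : ℕ} {c : ℕ × ℕ} (hc : c ∈ F.chords lo) :
    lo ≤ c.1 ∧ c.1 < c.2 ∧ c.2 < lo + F.toList.length := by
  induction F generalizing lo with
  | nil => simp [chords] at hc
  | free a F ih =>
    have := ih hc
    simp only [toList, List.length_cons]
    omega
  | chord a G F ihG ihF =>
    simp only [toList, List.length_cons, List.length_append]
    rcases mem_chords_chord.1 hc with rfl | hc | hc
    · dsimp only; omega
    · have := ihG hc; omega
    · have := ihF hc; omega

lemma exists_getElem?_of_mem_chords {F : CutWord E} {w : List (Arr E)} {lo : ℕ}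
    (hF : F.toList <+: w.drop lo) {c : ℕ × ℕ} (hc : c ∈ F.chords lo) :
    ∃ a, w[c.1]? = some a ∧ w[c.2]? = some (astar a) := by
  induction F generalizing lo with
  | nil => simp [chords] at hc
  | free a F ih => exact ih (toList_free_prefix_drop_iff.1 hF).2 hc
  | chord a G F ihG ihF =>
    obtain ⟨ha, hG, ha', hF⟩ := toList_chord_prefix_drop_iff.1 hF
    rcases mem_chords_chord.1 hc with rfl | hc | hc
    exacts [⟨a, ha, ha'⟩, ihG hG hc, ihF hF hc]

lemma chords_disjoint {F : CutWord E} {lo : ℕ} {c c' : ℕ × ℕ} (hc : c ∈ F.chords lo)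
    (hc' : c' ∈ F.chords lo) (hne : c ≠ c') :
    c.1 ≠ c'.1 ∧ c.1 ≠ c'.2 ∧ c.2 ≠ c'.1 ∧ c.2 ≠ c'.2 := by
  induction F generalizing lo with
  | nil => simp [chords] at hc
  | free a F ih => exact ih hc hc'
  | chord a G F ihG ihF =>
    rcases mem_chords_chord.1 hc with rfl | hc | hc <;>
      rcases mem_chords_chord.1 hc' with rfl | hc' | hc' <;>
      first
      | exact absurd rfl hne
      | exact ihG hc hc'
      | exact ihF hc hc'
      | (try have := chords_bounds hc)
        (try have := chords_bounds hc')
        grind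

lemma chords_noncrossing {F : CutWord E} {lo : ℕ} {c c' : ℕ × ℕ} (hc : c ∈ F.chords lo)
    (hc' : c' ∈ F.chords lo) : ¬ (c.1 < c'.1 ∧ c'.1 < c.2 ∧ c.2 < c'.2) := by
  induction F generalizing lo with
  | nil => simp [chords] at hc
  | free a F ih => exact ih hc hc'
  | chord a G F ihG ihF =>
    rcases mem_chords_chord.1 hc with rfl | hc | hc <;>
      rcases mem_chords_chord.1 hc' with rfl | hc' | hc' <;>
      first
      | exact ihG hc hc'
      | exact ihF hc hc'
      | (try have := chords_bounds hc)
        (try have := chords_bounds hc')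
        grind

lemma injOn_fst_chords (F : CutWord E) (lo : ℕ) : Set.InjOn Prod.fst {c | c ∈ F.chords lo} :=
  fun _ hc _ hc' h => by_contra fun hne => (chords_disjoint hc hc' hne).1 h

lemma filter_chords_chord_inside (a : Arr E) (G F : CutWord E) (lo : ℕ) :
    {c ∈ (chord a G F).chords lo | lo < c.1 ∧ c.2 < lo + 1 + G.toList.length} =
      G.chords (lo + 1) := by
  ext c
  rw [Finset.mem_filter, mem_chords_chord]
  constructor
  · rintro ⟨rfl | hc | hc, h₁, h₂⟩
    · exact absurd h₁ (lt_irrefl _)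
    · exact hc
    · have := chords_bounds hc; omega
  · intro hc
    have := chords_bounds hc
    exact ⟨.inr (.inl hc), by omega, by omega⟩

lemma filter_chords_chord_after (a : Arr E) (G F : CutWord E) (lo : ℕ) :
    {c ∈ (chord a G F).chords lo | lo + 1 + G.toList.length < c.1} =
      F.chords (lo + 2 + G.toList.length) := by
  ext c
  rw [Finset.mem_filter, mem_chords_chord]
  constructor
  · rintro ⟨rfl | hc | hc, h⟩
    · dsimp only at h; omega
    · have := chords_bounds hc; omega
    · exact hc
  · intro hc
    have := chords_bounds hc
    exact ⟨.inr (.inr hc), by omega⟩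

lemma chords_free_ne_chords_chord (a b : Arr E) (F G K : CutWord E) (lo : ℕ) :
    (free a F).chords lo ≠ (chord b G K).chords lo := by
  intro h
  have hmem : (lo, lo + 1 + G.toList.length) ∈ (free a F).chords lo := by simp [h]
  exact absurd (chords_bounds (F := F) hmem).1 (by simp)

lemma ext_of_toList_of_chords {F F' : CutWord E} {lo : ℕ} (hl : F.toList = F'.toList)
    (hc : F.chords lo = F'.chords lo) : F = F' := by
  induction F generalizing F' lo with
  | nil => cases F' <;> simp [toList] at hl ⊢
  | free a F ih =>
    cases F' with
    | nil => simp [toList] at hl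
    | free b F' =>
      simp only [toList, List.cons.injEq] at hl
      rw [hl.1, ih hl.2 hc]
    | chord b G K => exact absurd hc (chords_free_ne_chords_chord _ _ _ _ _ _)
  | chord a G F ihG ihF =>
    cases F' with
    | nil => simp [toList] at hl
    | free b F' => exact absurd hc.symm (chords_free_ne_chords_chord _ _ _ _ _ _)
    | chord b G' F' =>
      simp only [toList, List.cons.injEq] at hl
      obtain ⟨rfl, hl⟩ := hl
      have hlen : G.toList.length = G'.toList.length := by
        have := injOn_fst_chords (chord a G F) lo
          (show (lo, lo + 1 + G.toList.length) ∈ (chord a G F).chords lo by simp)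
          (show (lo, lo + 1 + G'.toList.length) ∈ (chord a G F).chords lo by simp [hc]) rfl
        simpa using this
      obtain ⟨hlG, hlF⟩ := List.append_inj hl hlen
      have hcG := filter_chords_chord_inside a G F lo
      have hcF := filter_chords_chord_after a G F lo
      rw [hc, hlen, filter_chords_chord_inside] at hcG
      rw [hc, hlen, filter_chords_chord_after] at hcF
      rw [ihG hlG hcG.symm, ihF (List.cons.inj hlF).2 hcF.symm]

end CutWord

/-- `H` is a cut of the subword of `w` formed by the arrows in the positions `lo, …, lo + n - 1`,
with positions still counted in `w`. -/
structure IsCutOn (w : List (Arr E)) (lo n : ℕ) (H : Finset (ℕ × ℕ)) : Prop where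
  bounds : ∀ c ∈ H, lo ≤ c.1 ∧ c.1 < c.2 ∧ c.2 < lo + n
  arrows : ∀ c ∈ H, ∃ a, w[c.1]? = some a ∧ w[c.2]? = some (astar a)
  disjoint : ∀ c ∈ H, ∀ c' ∈ H, c ≠ c' → c.1 ≠ c'.1 ∧ c.1 ≠ c'.2 ∧ c.2 ≠ c'.1 ∧ c.2 ≠ c'.2
  noncrossing : ∀ c ∈ H, ∀ c' ∈ H, ¬ (c.1 < c'.1 ∧ c'.1 < c.2 ∧ c.2 < c'.2)

lemma isCut_iff_isCutOn {w : List (Arr E)} {H : Finset (ℕ × ℕ)} :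
    IsCut w H ↔ IsCutOn w 0 w.length H := by
  constructor
  · rintro ⟨hpairs, hdisj, hcross⟩
    exact ⟨fun c hc => ⟨Nat.zero_le _, (hpairs c hc).1, by simpa using (hpairs c hc).2.1⟩,
      fun c hc => exists_eq_astar_iff.1 (hpairs c hc).2.2, hdisj,
      fun c hc c' hc' h => hcross ⟨c, hc, c', hc', h⟩⟩
  · intro h
    refine ⟨fun c hc => ?_, h.disjoint, fun ⟨c, hc, c', hc', hcc'⟩ => ?_⟩
    · obtain ⟨-, hlt, hlen⟩ := h.bounds c hc
      exact ⟨hlt, by simpa using hlen, exists_eq_astar_iff.2 (h.arrows c hc)⟩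
    · exact h.noncrossing c hc c' hc' hcc'

lemma mem_allCuts {w : List (Arr E)} {H : Finset (ℕ × ℕ)} : H ∈ allCuts w ↔ IsCut w H := by
  simp only [allCuts, Finset.mem_filter, Finset.mem_powerset, and_iff_right_iff_imp]
  intro h c hc
  obtain ⟨hlt, hlen, -⟩ := h.1 c hc
  exact Finset.mem_product.2 ⟨Finset.mem_range.2 (hlt.trans hlen), Finset.mem_range.2 hlen⟩

namespace IsCutOn

variable {w : List (Arr E)} {lo n : ℕ} {H : Finset (ℕ × ℕ)}

lemma of_subset {lo' n' : ℕ} {H' : Finset (ℕ × ℕ)} (h : IsCutOn w lo n H) (hH : H' ⊆ H)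
    (hb : ∀ c ∈ H', lo' ≤ c.1 ∧ c.2 < lo' + n') : IsCutOn w lo' n' H' where
  bounds c hc := ⟨(hb c hc).1, (h.bounds c (hH hc)).2.1, (hb c hc).2⟩
  arrows c hc := h.arrows c (hH hc)
  disjoint c hc c' hc' := h.disjoint c (hH hc) c' (hH hc')
  noncrossing c hc c' hc' := h.noncrossing c (hH hc) c' (hH hc')

lemma eq_insert_inside_union_after (h : IsCutOn w lo n H) {j : ℕ} (hj : (lo, j) ∈ H) :
    insert (lo, j) ({c ∈ H | lo < c.1 ∧ c.2 < j} ∪ {c ∈ H | j < c.1}) = H := by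
  ext c
  simp only [Finset.mem_insert, Finset.mem_union, Finset.mem_filter]
  constructor
  · rintro (rfl | hc | hc)
    exacts [hj, hc.1, hc.1]
  · intro hc
    by_cases hcj : c = (lo, j)
    · exact .inl hcj
    have hb := h.bounds c hc
    have hd := h.disjoint c hc _ hj hcj
    have hn := h.noncrossing _ hj c hc
    dsimp only at hd hn
    rcases lt_or_gt_of_ne hd.2.1 with hlt | hgt
    · exact .inr (.inl ⟨hc, by omega, by omega⟩)
    · exact .inr (.inr ⟨hc, hgt⟩)

lemma exists_cutWord (h : IsCutOn w lo n H) (hn : lo + n ≤ w.length) :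
    ∃ F : CutWord E, F.toList <+: w.drop lo ∧ F.toList.length = n ∧ F.chords lo = H := by
  induction n using Nat.strong_induction_on generalizing lo H with
  | _ n ih =>
  obtain rfl | hpos := n.eq_zero_or_pos
  · refine ⟨.nil, List.nil_prefix, rfl, (Finset.eq_empty_of_forall_notMem fun c hc => ?_).symm⟩
    have := h.bounds c hc
    omega
  by_cases hlo : ∃ j, (lo, j) ∈ H
  · obtain ⟨j, hj⟩ := hlo
    obtain ⟨a, ha, ha'⟩ := h.arrows _ hj
    have hb := h.bounds _ hj
    dsimp only at ha ha' hb
    obtain ⟨G, hGw, hGlen, hG⟩ := ih (j - (lo + 1)) (by omega)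
      (h.of_subset (H' := {c ∈ H | lo < c.1 ∧ c.2 < j}) (Finset.filter_subset _ _) fun c hc => by
        have := (Finset.mem_filter.1 hc).2
        omega) (lo := lo + 1) (by omega)
    obtain ⟨F, hFw, hFlen, hF⟩ := ih (lo + n - (j + 1)) (by omega)
      (h.of_subset (H' := {c ∈ H | j < c.1}) (Finset.filter_subset _ _) fun c hc => by
        have := (Finset.mem_filter.1 hc).2
        have := h.bounds c (Finset.mem_filter.1 hc).1
        omega) (lo := j + 1) (by omega)
    have hj₁ : lo + 1 + G.toList.length = j := by omega
    have hj₂ : lo + 2 + G.toList.length = j + 1 := by omega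
    refine ⟨.chord a G F, CutWord.toList_chord_prefix_drop_iff.2 ?_, ?_, ?_⟩
    · rw [hj₁, hj₂]
      exact ⟨ha, hGw, ha', hFw⟩
    · simp only [CutWord.toList, List.length_cons, List.length_append]
      omega
    · rw [CutWord.chords, hj₁, hj₂, hG, hF, h.eq_insert_inside_union_after hj]
  · have hloH : ∀ c ∈ H, c.1 ≠ lo := fun c hc hclo => hlo ⟨c.2, hclo ▸ hc⟩
    obtain ⟨F, hFw, hFlen, hF⟩ := ih (n - 1) (by omega)
      (h.of_subset (H' := H) subset_rfl fun c hc => by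
        have := hloH c hc
        have := h.bounds c hc
        omega) (lo := lo + 1) (by omega)
    refine ⟨.free w[lo] F, CutWord.toList_free_prefix_drop_iff.2 ⟨by simp, hFw⟩, ?_, hF⟩
    simp only [CutWord.toList, List.length_cons]
    omega

end IsCutOn

namespace CutWord

lemma isCut_chords (F : CutWord E) : IsCut F.toList (F.chords 0) :=
  isCut_iff_isCutOn.2
    { bounds := fun _ hc => chords_bounds hc
      arrows := fun _ hc => exists_getElem?_of_mem_chords List.prefix_rfl hc
      disjoint := fun _ hc _ hc' => chords_disjoint hc hc'
      noncrossing := fun _ hc _ hc' => chords_noncrossing hc hc' }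

lemma exists_of_isCut {w : List (Arr E)} {H : Finset (ℕ × ℕ)} (h : IsCut w H) :
    ∃ F : CutWord E, F.toList = w ∧ F.chords 0 = H := by
  obtain ⟨F, hFw, hlen, hF⟩ := (isCut_iff_isCutOn.1 h).exists_cutWord (zero_add _).le
  exact ⟨F, hFw.eq_of_length hlen, hF⟩

lemma finite_toList_eq (w : List (Arr E)) : {F : CutWord E | F.toList = w}.Finite := by
  refine Set.Finite.of_injOn (f := chords 0) (t := ↑(allCuts w)) ?_ ?_ (Finset.finite_toSet _)
  · rintro F rfl
    exact mem_allCuts.2 F.isCut_chords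
  · rintro F rfl F' hF' h
    exact ext_of_toList_of_chords (Eq.symm hF') h

/-- The cuts of the word `w`, as words with a cut. -/
def parses (w : List (Arr E)) : Finset (CutWord E) := (finite_toList_eq w).toFinset

@[simp] lemma mem_parses {w : List (Arr E)} {F : CutWord E} : F ∈ parses w ↔ F.toList = w := by
  simp [parses]

lemma sum_allCuts {M : Type*} [AddCommMonoid M] (w : List (Arr E)) (f : Finset (ℕ × ℕ) → M) :
    ∑ H ∈ allCuts w, f H = ∑ F ∈ parses w, f (F.chords 0) := by
  refine (Finset.sum_bij (fun F _ => F.chords 0) (fun F hF => ?_) (fun F hF F' hF' h => ?_)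
    (fun H hH => ?_) fun _ _ => rfl).symm
  · exact mem_allCuts.2 (mem_parses.1 hF ▸ F.isCut_chords)
  · exact ext_of_toList_of_chords ((mem_parses.1 hF).trans (mem_parses.1 hF').symm) h
  · obtain ⟨F, hF, rfl⟩ := exists_of_isCut (mem_allCuts.1 hH)
    exact ⟨F, mem_parses.2 hF, rfl⟩

end CutWord

/-! ### The dual tree of a word with a cut -/

section Lists

variable {α β : Type*}

lemma eq_of_pairwise_lt_of_mem_iff [Preorder β] (f : α → β) {l m : List α}
    (hl : l.Pairwise fun a b => f a < f b) (hm : m.Pairwise fun a b => f a < f b)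
    (h : ∀ a, a ∈ l ↔ a ∈ m) : l = m :=
  haveI : Std.Irrefl fun a b : α => f a < f b := ⟨fun a => lt_irrefl (f a)⟩
  haveI : Std.Antisymm fun a b : α => f a < f b := ⟨fun _ _ hab hba => absurd hab hba.asymm⟩
  hl.eq_of_mem_iff hm h

end Lists

namespace CutWord

/-- The word of the outer face: the arrows incident to no chord and lying under no chord. -/
def outerWord : CutWord E → List (Arr E)
  | nil => []
  | free a F => a :: F.outerWord
  | chord _ _ F => F.outerWord

/-- The branches of the dual tree at the vertex of the outer face, one for each outermost chord. -/
def branches : CutWord E → List (Bool × ODTree s t)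
  | nil => []
  | free _ F => F.branches
  | chord a G F =>
      (a.isLeft, .node (mkNk s t (atgt s t a) G.outerWord) G.branches) :: F.branches

/-- The dual decorated tree, rooted at the outer face, of a cut of a loop based at `v`. -/
def dualTree (v : I) (F : CutWord E) : ODTree s t :=
  .node (mkNk s t v F.outerWord) (F.branches s t)

/-- The outermost chords, each with the arrow at its left end and the cut word below it, when the
word starts at position `lo`. -/
def outerChords : ℕ → CutWord E → List ((ℕ × ℕ) × Arr E × CutWord E)
  | _, nil => []
  | lo, free _ F => F.outerChords (lo + 1)
  | lo, chord a G F =>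
      ((lo, lo + 1 + G.toList.length), a, G) :: F.outerChords (lo + 2 + G.toList.length)

/-- The positions of the arrows of `outerWord`, when the word starts at position `lo`. -/
def outerPositions : ℕ → CutWord E → List ℕ
  | _, nil => []
  | lo, free _ F => lo :: F.outerPositions (lo + 1)
  | lo, chord _ G F => F.outerPositions (lo + 2 + G.toList.length)

lemma map_outerChords_eq_branches (F : CutWord E) (lo : ℕ) :
    (F.outerChords lo).map (fun x => (x.2.1.isLeft, x.2.2.dualTree s t (atgt s t x.2.1))) =
      F.branches s t := by
  induction F generalizing lo with
  | nil => rfl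
  | free _ _ ih => exact ih _
  | chord a G F _ ihF => rw [outerChords, List.map_cons, ihF]; rfl

section OuterChords

variable {F G : CutWord E} {a : Arr E} {lo : ℕ} {c : ℕ × ℕ}

lemma mem_chords_of_mem_outerChords (h : (c, a, G) ∈ F.outerChords lo) : c ∈ F.chords lo := by
  induction F generalizing lo with
  | nil => simp [outerChords] at h
  | free _ _ ih => exact ih h
  | chord b G' F _ ihF =>
    rcases List.mem_cons.1 h with h | h
    · exact mem_chords_chord.2 (.inl (Prod.mk.inj h).1)
    · exact mem_chords_chord.2 (.inr (.inr (ihF h)))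

lemma snd_eq_of_mem_outerChords (h : (c, a, G) ∈ F.outerChords lo) :
    c.2 = c.1 + 1 + G.toList.length := by
  induction F generalizing lo with
  | nil => simp [outerChords] at h
  | free _ _ ih => exact ih h
  | chord b G' F _ ihF =>
    rcases List.mem_cons.1 h with h | h
    · obtain ⟨rfl, rfl, rfl⟩ := by simpa only [Prod.mk.injEq] using h
      rfl
    · exact ihF h

lemma prefix_of_mem_outerChords {w : List (Arr E)} (h : (c, a, G) ∈ F.outerChords lo)
    (hF : F.toList <+: w.drop lo) : w[c.1]? = some a ∧ G.toList <+: w.drop (c.1 + 1) := by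
  induction F generalizing lo with
  | nil => simp [outerChords] at h
  | free _ _ ih => exact ih h (toList_free_prefix_drop_iff.1 hF).2
  | chord b G' F _ ihF =>
    obtain ⟨hb, hG', -, hF⟩ := toList_chord_prefix_drop_iff.1 hF
    rcases List.mem_cons.1 h with h | h
    · obtain ⟨rfl, rfl, rfl⟩ := by simpa only [Prod.mk.injEq] using h
      exact ⟨hb, hG'⟩
    · exact ihF h hF

lemma mem_chords_below_iff (h : (c, a, G) ∈ F.outerChords lo) {c' : ℕ × ℕ} :
    c' ∈ F.chords lo ∧ c.1 < c'.1 ∧ c'.2 < c.2 ↔ c' ∈ G.chords (c.1 + 1) := by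
  induction F generalizing lo with
  | nil => simp [outerChords] at h
  | free _ _ ih => exact ih h
  | chord b G' F _ ihF =>
    rcases List.mem_cons.1 h with h | h
    · obtain ⟨rfl, rfl, rfl⟩ := by simpa only [Prod.mk.injEq] using h
      rw [← filter_chords_chord_inside a G F lo, Finset.mem_filter]
    · rw [← ihF h, mem_chords_chord]
      have hc := chords_bounds (mem_chords_of_mem_outerChords h)
      refine and_congr_left fun hc' => ⟨?_, fun h => .inr (.inr h)⟩
      rintro (rfl | hG' | hF)
      · dsimp only at hc'; omega
      · have := chords_bounds hG'; omega
      · exact hF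

lemma mem_map_fst_outerChords :
    c ∈ (F.outerChords lo).map Prod.fst ↔
      c ∈ F.chords lo ∧ ∀ c' ∈ F.chords lo, ¬ (c'.1 < c.1 ∧ c.2 < c'.2) := by
  induction F generalizing lo with
  | nil => simp [outerChords, chords]
  | free _ _ ih => exact ih
  | chord b G F _ ihF =>
    simp only [outerChords, List.map_cons, List.mem_cons, ihF, mem_chords_chord,
      or_imp, forall_and, forall_eq]
    constructor
    · rintro (rfl | ⟨hc, hout⟩)
      · exact ⟨.inl rfl, by simp, fun c' hc' => by have := chords_bounds hc'; omega,
          fun c' hc' => by have := chords_bounds hc'; omega⟩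
      · have hb := chords_bounds hc
        exact ⟨.inr (.inr hc), by omega, fun c' hc' => by have := chords_bounds hc'; omega, hout⟩
    · rintro ⟨rfl | hc | hc, hhead, -, hout⟩
      · exact .inl rfl
      · have := chords_bounds hc; omega
      · exact .inr ⟨hc, hout⟩

variable (F lo)

lemma pairwise_map_fst_outerChords :
    ((F.outerChords lo).map Prod.fst).Pairwise fun c c' => c.1 < c'.1 := by
  induction F generalizing lo with
  | nil => exact .nil
  | free _ _ ih => exact ih _
  | chord b G F _ ihF =>
    refine List.Pairwise.cons (fun c hc => ?_) (ihF _)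
    dsimp only
    have := chords_bounds (mem_map_fst_outerChords.1 hc).1
    omega

variable {F lo}

lemma mem_outerPositions {m : ℕ} :
    m ∈ F.outerPositions lo ↔ (lo ≤ m ∧ m < lo + F.toList.length) ∧
      ∀ c ∈ (F.outerChords lo).map Prod.fst, ¬ (c.1 ≤ m ∧ m ≤ c.2) := by
  induction F generalizing lo with
  | nil => simp [outerPositions, toList]
  | free b F ih =>
    rw [outerPositions, List.mem_cons, ih, outerChords, toList, List.length_cons]
    constructor
    · rintro (rfl | ⟨hm, hout⟩)
      · refine ⟨by omega, fun c hc => ?_⟩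
        have := chords_bounds (mem_map_fst_outerChords.1 hc).1
        omega
      · exact ⟨by omega, hout⟩
    · rintro ⟨hm, hout⟩
      rcases hm.1.eq_or_lt with rfl | hlt
      exacts [.inl rfl, .inr ⟨by omega, hout⟩]
  | chord b G F _ ihF =>
    simp only [outerPositions, ihF, outerChords, toList, List.length_cons, List.length_append,
      List.map_cons, List.mem_cons, forall_eq_or_imp]
    constructor
    · rintro ⟨hm, hout⟩
      exact ⟨by omega, by omega, hout⟩
    · rintro ⟨hm, hhead, hout⟩
      exact ⟨by omega, hout⟩

variable (F lo)

lemma pairwise_outerPositions : (F.outerPositions lo).Pairwise (· < ·) := by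
  induction F generalizing lo with
  | nil => exact .nil
  | free _ _ ih => exact List.Pairwise.cons (fun m hm => (mem_outerPositions.1 hm).1.1) (ih _)
  | chord _ _ _ _ ihF => exact ihF _

variable {F lo}

lemma filterMap_outerPositions {w : List (Arr E)} (hF : F.toList <+: w.drop lo) :
    (F.outerPositions lo).filterMap (w[·]?) = F.outerWord := by
  induction F generalizing lo with
  | nil => rfl
  | free b F ih =>
    obtain ⟨hb, hF⟩ := toList_free_prefix_drop_iff.1 hF
    rw [outerPositions, List.filterMap_cons_some hb, ih hF, outerWord]
  | chord b G F _ ihF => exact ihF (toList_chord_prefix_drop_iff.1 hF).2.2.2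

end OuterChords

end CutWord

/-! ### `buildOT` computes the dual tree -/

/-- The chord starting at position `i` if there is one and it is outermost among the chords of `H`
lying between `lo` and `hi`, as tested in the recursion of `buildOT`. -/
def outermostChordAt (H : List (ℕ × ℕ)) (lo hi i : ℕ) : Option (ℕ × ℕ) :=
  match H.find? (fun c => c.1 == i) with
  | some c => if lo ≤ c.1 ∧ c.2 < hi ∧
      ¬ (H.any (fun c' =>
        decide (c' ≠ c ∧ lo ≤ c'.1 ∧ c'.1 < c.1 ∧ c.2 < c'.2 ∧ c'.2 < hi)))
      then some c else none
  | none => none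

/-- The list `outer` in the recursion of `buildOT`, for a word of length `n`. -/
def outermostChords (n : ℕ) (H : List (ℕ × ℕ)) (lo hi : ℕ) : List (ℕ × ℕ) :=
  (List.range n).filterMap (outermostChordAt H lo hi)

/-- The word `lbl` in the recursion of `buildOT`. -/
def uncoveredWord (w : List (Arr E)) (outer : List (ℕ × ℕ)) (lo hi : ℕ) : List (Arr E) :=
  (List.range w.length).filterMap fun m =>
    if lo ≤ m ∧ m < hi ∧ ¬ outer.any (fun c => decide (c.1 ≤ m ∧ m ≤ c.2))
    then w[m]? else none

variable {s t} in
lemma buildOT_succ (w : List (Arr E)) (fuel : ℕ) (H : List (ℕ × ℕ)) (lo hi : ℕ) (v : I) :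
    buildOT s t w (fuel + 1) H lo hi v =
      .node (mkNk s t v (uncoveredWord w (outermostChords w.length H lo hi) lo hi))
        ((outermostChords w.length H lo hi).map fun c =>
          ((match w[c.1]? with | some (.inl _) => true | _ => false),
           buildOT s t w fuel (H.filter fun c' => decide (c.1 < c'.1 ∧ c'.2 < c.2)) (c.1 + 1) c.2
             (match w[c.1]? with | some a => atgt s t a | none => v))) := by
  rw [buildOT]
  rfl

section BuildOT

variable {H : List (ℕ × ℕ)} {n lo hi : ℕ}

lemma outermostChordAt_eq_some_iff (hH : Set.InjOn Prod.fst {c | c ∈ H}) {i : ℕ} {c : ℕ × ℕ} :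
    outermostChordAt H lo hi i = some c ↔ (c ∈ H ∧ c.1 = i) ∧ lo ≤ c.1 ∧ c.2 < hi ∧
      ∀ c' ∈ H, ¬ (c' ≠ c ∧ lo ≤ c'.1 ∧ c'.1 < c.1 ∧ c.2 < c'.2 ∧ c'.2 < hi) := by
  rw [← find?_eq_some_iff_of_injOn hH, outermostChordAt]
  cases H.find? (fun c => c.1 == i) with
  | none => simp
  | some d =>
    simp only [Option.ite_none_right_eq_some, Option.some_inj, List.any_eq_true,
      decide_eq_true_eq, not_exists, not_and]
    constructor
    · rintro ⟨h, rfl⟩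
      exact ⟨rfl, h⟩
    · rintro ⟨rfl, h⟩
      exact ⟨h, rfl⟩

lemma mem_outermostChords (hH : Set.InjOn Prod.fst {c | c ∈ H}) {c : ℕ × ℕ} :
    c ∈ outermostChords n H lo hi ↔ c.1 < n ∧ c ∈ H ∧ lo ≤ c.1 ∧ c.2 < hi ∧
      ∀ c' ∈ H, ¬ (c' ≠ c ∧ lo ≤ c'.1 ∧ c'.1 < c.1 ∧ c.2 < c'.2 ∧ c'.2 < hi) := by
  simp only [outermostChords, List.mem_filterMap, List.mem_range,
    outermostChordAt_eq_some_iff hH]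
  constructor
  · rintro ⟨_, hn, ⟨hc, rfl⟩, h⟩
    exact ⟨hn, hc, h⟩
  · rintro ⟨hn, hc, h⟩
    exact ⟨c.1, hn, ⟨hc, rfl⟩, h⟩

lemma pairwise_outermostChords (hH : Set.InjOn Prod.fst {c | c ∈ H}) :
    (outermostChords n H lo hi).Pairwise fun c c' => c.1 < c'.1 := by
  refine List.Pairwise.filterMap _ (fun i i' hii' c hc c' hc' => ?_) List.pairwise_lt_range
  rwa [((outermostChordAt_eq_some_iff hH).1 hc).1.2, ((outermostChordAt_eq_some_iff hH).1 hc').1.2]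

namespace CutWord

variable {F : CutWord E} {w : List (Arr E)}

lemma injOn_fst_of_mem_iff (hH : ∀ c, c ∈ H ↔ c ∈ F.chords lo) :
    Set.InjOn Prod.fst {c | c ∈ H} := by
  simpa only [hH] using injOn_fst_chords F lo

lemma outermostChords_eq_map_outerChords (hF : F.toList <+: w.drop lo)
    (hH : ∀ c, c ∈ H ↔ c ∈ F.chords lo) :
    outermostChords w.length H lo (lo + F.toList.length) = (F.outerChords lo).map Prod.fst := by
  have hinj := injOn_fst_of_mem_iff hH
  refine eq_of_pairwise_lt_of_mem_iff Prod.fst (pairwise_outermostChords hinj)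
    (pairwise_map_fst_outerChords F lo) fun c => ?_
  rw [mem_outermostChords hinj, mem_map_fst_outerChords]
  simp only [hH]
  constructor
  · rintro ⟨-, hc, -, -, hout⟩
    refine ⟨hc, fun c' hc' hcc' => hout c' hc' ⟨?_, ?_⟩⟩
    · rintro rfl
      exact lt_irrefl _ hcc'.1
    · have := chords_bounds hc'
      omega
  · rintro ⟨hc, hout⟩
    obtain ⟨a, ha, -⟩ := exists_getElem?_of_mem_chords hF hc
    have := chords_bounds hc
    exact ⟨(List.getElem?_eq_some_iff.1 ha).1, hc, by omega, by omega,
      fun c' hc' hcc' => hout c' hc' ⟨hcc'.2.2.1, hcc'.2.2.2.1⟩⟩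

lemma uncoveredWord_eq_outerWord (hF : F.toList <+: w.drop lo) :
    uncoveredWord w ((F.outerChords lo).map Prod.fst) lo (lo + F.toList.length) =
      F.outerWord := by
  have hpos : (List.range w.length).filter (· ∈ F.outerPositions lo) = F.outerPositions lo := by
    refine eq_of_pairwise_lt_of_mem_iff id (List.pairwise_lt_range.filter _)
      (pairwise_outerPositions F lo) fun m => ?_
    simp only [List.mem_filter, List.mem_range, decide_eq_true_eq, and_iff_right_iff_imp]
    intro hm
    have := (mem_outerPositions.1 hm).1
    have := hF.length_le
    rw [List.length_drop] at this
    omega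
  rw [← filterMap_outerPositions hF, ← hpos, List.filterMap_filter, uncoveredWord]
  refine List.filterMap_congr fun m _ => if_congr ?_ rfl rfl
  rw [decide_eq_true_eq, mem_outerPositions, and_assoc]
  simp only [List.any_eq_true, decide_eq_true_eq, not_exists, not_and]

theorem buildOT_eq_dualTree {fuel : ℕ} (v : I) (hF : F.toList <+: w.drop lo)
    (hfuel : F.toList.length < fuel) (hH : ∀ c, c ∈ H ↔ c ∈ F.chords lo) :
    buildOT s t w fuel H lo (lo + F.toList.length) v = F.dualTree s t v := by
  induction fuel generalizing F H lo v with
  | zero => simp at hfuel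
  | succ fuel ih =>
    rw [buildOT_succ, outermostChords_eq_map_outerChords hF hH, uncoveredWord_eq_outerWord hF,
      dualTree, ← map_outerChords_eq_branches s t F lo, List.map_map]
    congr 1
    refine List.map_congr_left fun ⟨c, a, G⟩ hx => ?_
    obtain ⟨ha, hG⟩ := prefix_of_mem_outerChords hx hF
    have hbounds := chords_bounds (mem_chords_of_mem_outerChords hx)
    have hsnd := snd_eq_of_mem_outerChords hx
    have hbelow := ih (atgt s t a) hG (by omega)
      (H := H.filter fun c' => decide (c.1 < c'.1 ∧ c'.2 < c.2)) fun c' => by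
        rw [List.mem_filter, hH, decide_eq_true_eq, mem_chords_below_iff hx]
    rw [← hsnd] at hbelow
    simp only [Function.comp_apply, ha, hbelow]
    cases a <;> rfl

end CutWord

end BuildOT

/-! ### Rotating a word with a cut -/

namespace CutWord

/-- Concatenation of words with a cut; no chord joins the two words. -/
def append : CutWord E → CutWord E → CutWord E
  | nil, K => K
  | free a F, K => free a (F.append K)
  | chord a G F, K => chord a G (F.append K)

instance : Append (CutWord E) := ⟨append⟩

@[simp] lemma nil_append (K : CutWord E) : nil ++ K = K := rfl

@[simp] lemma free_append (a : Arr E) (F K : CutWord E) : free a F ++ K = free a (F ++ K) := rfl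

@[simp] lemma chord_append (a : Arr E) (G F K : CutWord E) :
    chord a G F ++ K = chord a G (F ++ K) := rfl

@[simp] lemma append_nil (F : CutWord E) : F ++ nil = F := by
  induction F <;> simp [*]

lemma append_assoc (F G K : CutWord E) : F ++ G ++ K = F ++ (G ++ K) := by
  induction F <;> simp [*]

@[simp] lemma toList_append (F K : CutWord E) : (F ++ K).toList = F.toList ++ K.toList := by
  induction F <;> simp [toList, *]

@[simp] lemma outerWord_append (F K : CutWord E) :
    (F ++ K).outerWord = F.outerWord ++ K.outerWord := by
  induction F <;> simp [outerWord, *]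

@[simp] lemma branches_append (F K : CutWord E) :
    (F ++ K).branches s t = F.branches s t ++ K.branches s t := by
  induction F <;> simp [branches, *]

/-- The mirror image of a word with a cut. -/
def reverse : CutWord E → CutWord E
  | nil => nil
  | free a F => F.reverse ++ free a nil
  | chord a G F => F.reverse ++ chord (astar a) G.reverse nil

lemma reverse_append (F K : CutWord E) : (F ++ K).reverse = K.reverse ++ F.reverse := by
  induction F <;> simp [reverse, append_assoc, *]

lemma reverse_involutive : Function.Involutive (reverse (E := E)) := by
  intro F
  induction F <;> simp [reverse, reverse_append, *]

/-- The word with a cut obtained by moving the first arrow to the end. -/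
def rot : CutWord E → CutWord E
  | nil => nil
  | free a F => F ++ free a nil
  | chord a G F => G ++ chord (astar a) F nil

lemma toList_rot (F : CutWord E) : F.rot.toList = F.toList.rotate 1 := by
  cases F <;> simp [rot, toList]

lemma reverse_comp_rot_involutive : Function.Involutive (reverse ∘ rot (E := E)) := by
  rintro (_ | ⟨a, F⟩ | ⟨a, G, F⟩) <;>
    simp [rot, reverse, reverse_append, reverse_involutive _]

lemma rot_bijective : Function.Bijective (rot (E := E)) :=
  (reverse_involutive.bijective.of_comp_iff' _).1 reverse_comp_rot_involutive.bijective

variable {s t}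

lemma isPathFrom_outerWord {F : CutWord E} {v : I} (h : IsPathFrom s t v F.toList) :
    IsPathFrom s t v F.outerWord ∧ pathTgt s t v F.outerWord = pathTgt s t v F.toList := by
  induction F generalizing v with
  | nil => exact ⟨h, rfl⟩
  | free a F ih => exact ⟨⟨h.1, (ih h.2).1⟩, (ih h.2).2⟩
  | chord a G F _ ihF =>
    simp only [toList, IsPathFrom, isPathFrom_append, atgt_astar] at h
    obtain ⟨rfl, -, -, hF⟩ := h
    simpa [outerWord, toList, pathTgt, pathTgt_append] using ihF hF

lemma isLoop_outerWord {F : CutWord E} {v : I} (h : IsLoop s t v F.toList) :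
    IsLoop s t v F.outerWord :=
  ⟨(isPathFrom_outerWord h.1).1, (isPathFrom_outerWord h.1).2.trans h.2⟩

lemma mk_dualTree_rot {v : I} {F : CutWord E} {a : Arr E} {l : List (Arr E)}
    (hF : F.toList = a :: l) (h : IsLoop s t v (a :: l)) :
    (Quot.mk ODTree.Rel (F.dualTree s t v) : ODT s t) =
      Quot.mk ODTree.Rel (F.rot.dualTree s t (atgt s t a)) := by
  rw [← hF] at h
  have hv : asrc s t a = v := (hF ▸ h.1 : IsPathFrom s t v (a :: l)).1
  cases F with
  | nil => cases hF
  | free b F =>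
    obtain ⟨rfl, -⟩ := List.cons.inj hF
    have hlabel := mkNk_rotate (isLoop_outerWord h)
    simp only [dualTree, rot, outerWord, branches, outerWord_append, branches_append,
      List.append_nil, hlabel]
  | chord b G F =>
    obtain ⟨rfl, -⟩ := List.cons.inj hF
    simp only [dualTree, rot, outerWord, branches, outerWord_append, branches_append,
      List.append_nil, isLeft_astar, atgt_astar, hv]
    exact Quot.sound .reroot

end CutWord

/-! ### `η_or` on representatives -/

section CutSum

lemma apply_out_of_rel {α β : Type*} {r : α → α → Prop} (f : α → β)
    (hf : ∀ a b, r a b → f a = f b) (a : α) : f (Quot.mk r a).out = f a :=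
  congrArg (Quot.lift f hf) (Quot.out_eq _)

lemma finsuppLift_single_one {M X : Type*} [AddCommMonoid M] [Module k M] (f : X → M) (x : X) :
    Finsupp.lift M k X f (Finsupp.single x 1) = f x := by
  simp

/-- The sum of the dual trees of all cuts of the word `l`, as a loop based at `v`. -/
def cutSum (v : I) (l : List (Arr E)) : ODMod k s t :=
  ∑ F ∈ CutWord.parses l, Finsupp.single (Quot.mk ODTree.Rel (F.dualTree s t v)) 1

lemma sum_allCuts_buildOT (v : I) (l : List (Arr E)) :
    ∑ H ∈ allCuts l, (Finsupp.single (Quot.mk ODTree.Rel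
      (buildOT s t l (l.length + 1) H.toList 0 l.length v)) 1 : ODMod k s t) =
      cutSum k s t v l := by
  rw [CutWord.sum_allCuts, cutSum]
  refine Finset.sum_congr rfl fun F hF => ?_
  obtain rfl := CutWord.mem_parses.1 hF
  have := CutWord.buildOT_eq_dualTree s t (H := (F.chords 0).toList) (lo := 0)
    (w := F.toList) v List.prefix_rfl (Nat.lt_succ_self _) (fun _ => Finset.mem_toList)
  rw [zero_add] at this
  rw [this]

variable {s t}

lemma cutSum_cons {v : I} {a : Arr E} {l : List (Arr E)} (h : IsLoop s t v (a :: l)) :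
    cutSum k s t v (a :: l) = cutSum k s t (atgt s t a) (l ++ [a]) := by
  refine Finset.sum_bijective CutWord.rot CutWord.rot_bijective (fun F => ?_) fun F hF => ?_
  · have hrot : l ++ [a] = (a :: l).rotate 1 := by simp
    rw [CutWord.mem_parses, CutWord.mem_parses, CutWord.toList_rot, hrot,
      (List.rotate_injective 1).eq_iff]
  · rw [CutWord.mk_dualTree_rot (CutWord.mem_parses.1 hF) h]

lemma cutSum_append_comm {v : I} {l m : List (Arr E)} (h : IsLoop s t v (l ++ m)) :
    cutSum k s t v (l ++ m) = cutSum k s t (pathTgt s t v l) (m ++ l) := by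
  induction l generalizing v m with
  | nil => simp [pathTgt]
  | cons a l ih =>
    rw [List.cons_append] at h
    rw [List.cons_append, cutSum_cons k h, List.append_assoc,
      ih (by simpa using h.rotate), List.append_assoc]
    rfl

lemma etaOr_single_mkNk {v : I} {l : List (Arr E)} (h : IsLoop s t v l) :
    etaOr k s t (Finsupp.single (mkNk s t v l) 1) = cutSum k s t v l := by
  refine (finsuppLift_single_one k _ _).trans ?_
  simp only [sum_allCuts_buildOT, mkNk_of_isLoop h]
  refine apply_out_of_rel (fun p : ClosedQPath s t => cutSum k s t p.path.src p.path.arrows)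
    (fun p q ⟨a, l, hp, hq, hsrc⟩ => ?_) _
  have hloop : IsLoop s t p.path.src (a :: l) := hp ▸ ⟨p.path.valid, p.closed⟩
  simp only [hp, hq, hsrc, cutSum_cons k hloop]

lemma etaOr_mkN {v : I} {l : List (Arr E)} (h : IsLoop s t v l) :
    etaOr k s t (mkN k s t v l) = cutSum k s t v l := by
  rw [mkN_of_isLoop k h, etaOr_single_mkNk k h]

end CutSum

/-! ### Injectivity -/

section Injectivity

/-- The label of the vertex of a tree with a single vertex, and zero for all other trees. -/
def ODTree.vertexLabel : ODTree s t → NeckMod k s t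
  | .node x [] => Finsupp.single x 1
  | .node _ (_ :: _) => 0

variable {s t} in
lemma ODTree.vertexLabel_rel {T T' : ODTree s t} (h : ODTree.Rel T T') :
    T.vertexLabel k = T'.vertexLabel k := by
  rcases h with @⟨x, c, _ | ⟨c', cs⟩⟩ | @⟨x, y, b, _ | ⟨c, ls⟩, ts⟩ <;> rfl

/-- The linear extension `T_or(Φ_or) → L` of `ODTree.vertexLabel`, a left inverse of `η_or`. -/
def vertexLabel : ODMod k s t →ₗ[k] NeckMod k s t :=
  Finsupp.lift (NeckMod k s t) k (ODT s t)
    (Quot.lift (ODTree.vertexLabel k s t) fun _ _ => ODTree.vertexLabel_rel k)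

lemma vertexLabel_mk (T : ODTree s t) :
    vertexLabel k s t (Finsupp.single (Quot.mk ODTree.Rel T) 1) = T.vertexLabel k :=
  finsuppLift_single_one k _ _

namespace CutWord

/-- The word `l` with the empty cut. -/
def ofList : List (Arr E) → CutWord E
  | [] => nil
  | a :: l => free a (ofList l)

@[simp] lemma toList_ofList (l : List (Arr E)) : (ofList l).toList = l := by
  induction l <;> simp [ofList, toList, *]

@[simp] lemma outerWord_ofList (l : List (Arr E)) : (ofList l).outerWord = l := by
  induction l <;> simp [ofList, outerWord, *]

@[simp] lemma branches_ofList (l : List (Arr E)) : (ofList l).branches s t = [] := by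
  induction l <;> simp [ofList, branches, *]

lemma eq_ofList_of_branches_eq_nil {F : CutWord E} (h : F.branches s t = []) :
    F = ofList F.toList := by
  induction F with
  | nil => rfl
  | free a F ih => rw [toList, ofList, ← ih h]
  | chord a G F _ _ => cases h

end CutWord

lemma vertexLabel_cutSum (v : I) (l : List (Arr E)) :
    vertexLabel k s t (cutSum k s t v l) = Finsupp.single (mkNk s t v l) 1 := by
  rw [cutSum, map_sum, Finset.sum_eq_single (CutWord.ofList l)]
  · rw [vertexLabel_mk, CutWord.dualTree, CutWord.branches_ofList, CutWord.outerWord_ofList,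
      ODTree.vertexLabel]
  · intro F hF hne
    rw [vertexLabel_mk, CutWord.dualTree]
    cases hbranches : F.branches s t with
    | nil =>
      rw [← CutWord.mem_parses.1 hF] at hne
      exact absurd (CutWord.eq_ofList_of_branches_eq_nil s t hbranches) hne
    | cons b bs => rfl
  · simp

lemma vertexLabel_comp_etaOr : vertexLabel k s t ∘ₗ etaOr k s t = LinearMap.id := by
  refine Finsupp.lhom_ext' fun q => LinearMap.ext_ring ?_
  obtain ⟨v, l, h, rfl⟩ := exists_isLoop_eq_mkNk q
  simp only [LinearMap.comp_apply, Finsupp.lsingle_apply, LinearMap.id_apply,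
    etaOr_single_mkNk k h, vertexLabel_cutSum]

theorem etaOr_injective : Function.Injective (etaOr k s t) :=
  Function.LeftInverse.injective (g := vertexLabel k s t) fun x =>
    LinearMap.congr_fun (vertexLabel_comp_etaOr k s t) x

end Injectivity

/-! ### The cobracket of a dual tree -/

section TreeCobracket

/-- The bilinear map `(x, y) ↦ x ⊗ y - y ⊗ x`. -/
def wedge (M : Type*) [AddCommGroup M] [Module k M] : M →ₗ[k] M →ₗ[k] M ⊗[k] M :=
  TensorProduct.mk k M M - (TensorProduct.mk k M M).flip

@[simp] lemma wedge_apply {M : Type*} [AddCommGroup M] [Module k M] (x y : M) :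
    wedge k M x y = x ⊗ₜ[k] y - y ⊗ₜ[k] x := rfl

lemma neg_one_smul_wedge {M : Type*} [AddCommGroup M] [Module k M] (x y : M) :
    (-1 : k) • wedge k M x y = wedge k M y x := by
  rw [wedge_apply, wedge_apply, neg_one_smul, neg_sub]

lemma map_wedge {M N : Type*} [AddCommGroup M] [Module k M] [AddCommGroup N] [Module k N]
    (f : M →ₗ[k] N) (x y : M) :
    TensorProduct.map f f (wedge k M x y) = wedge k N (f x) (f y) := by
  simp only [wedge_apply, map_sub, TensorProduct.map_tmul]

variable {s t}

/-- The summand of `ρ^ss_O` for an edge with orientation flag `b`, the component `A` away from the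
root and the component `B` containing the root. -/
def edgeTerm (b : Bool) (A B : ODT s t) : ODMod k s t ⊗[k] ODMod k s t :=
  if b then wedge k _ (Finsupp.single B 1) (Finsupp.single A 1)
  else wedge k _ (Finsupp.single A 1) (Finsupp.single B 1)

lemma edgeTerm_not (b : Bool) (A B : ODT s t) : edgeTerm k (!b) A B = edgeTerm k b B A := by
  cases b <;> rfl

lemma edgeTerm_isLeft (a : Arr E) (A B : ODT s t) :
    edgeTerm k a.isLeft A B =
      omg k a (astar a) • wedge k _ (Finsupp.single B 1) (Finsupp.single A 1) := by
  rw [omg_astar]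
  cases a with
  | inl => exact (one_smul k _).symm
  | inr => exact (neg_one_smul_wedge k _ _).symm

/-- The value of `ρ^ss_O` on a decorated tree, computed on a planar rooted representation. -/
def treeCobracket (T : ODTree s t) : ODMod k s t ⊗[k] ODMod k s t :=
  (T.cuts.map fun p => edgeTerm k p.1 (Quot.mk ODTree.Rel p.2.1) (Quot.mk ODTree.Rel p.2.2)).sum

lemma ODTree.cutsL_append (l m : List (Bool × ODTree s t)) :
    ODTree.cutsL (l ++ m) =
      (ODTree.cutsL l).map (fun p => (p.1, p.2.1, p.2.2 ++ m)) ++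
        (ODTree.cutsL m).map (fun p => (p.1, p.2.1, l ++ p.2.2)) := by
  induction l with
  | nil => simp [ODTree.cutsL]
  | cons c l ih => simp [ODTree.cutsL, ih, Function.comp_def]

lemma treeCobracket_rel {T T' : ODTree s t} (h : ODTree.Rel T T') :
    treeCobracket k T = treeCobracket k T' := by
  rcases h with @⟨x, c, cs⟩ | @⟨x, y, b, ls, ts⟩
  · have hrot (c : Bool × ODTree s t) (ds : List (Bool × ODTree s t)) :
        (Quot.mk ODTree.Rel (.node x (c :: ds)) : ODT s t) = Quot.mk _ (.node x (ds ++ [c])) :=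
      Quot.sound .rot
    simp only [treeCobracket, ODTree.cuts, ODTree.cutsL_append, ODTree.cutsL, List.map_append,
      List.map_map, List.map_cons, List.map_nil, List.append_nil, List.sum_append, List.sum_cons,
      Function.comp_def, hrot]
    abel
  · have hreroot (ls ts : List (Bool × ODTree s t)) :
        (Quot.mk ODTree.Rel (.node x ((b, .node y ls) :: ts)) : ODT s t) =
          Quot.mk _ (.node y (ls ++ [(!b, .node x ts)])) :=
      Quot.sound .reroot
    have hflip := edgeTerm_not k b (Quot.mk ODTree.Rel (.node x ts))
      (Quot.mk ODTree.Rel (.node y ls))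
    simp only [treeCobracket, ODTree.cuts, ODTree.cutsL_append, ODTree.cutsL, List.map_append,
      List.map_map, List.map_cons, List.map_nil, List.append_nil, List.sum_append, List.sum_cons,
      Function.comp_def, hreroot, hflip]
    abel

lemma rhoOD_single_mk (T : ODTree s t) :
    rhoOD k s t (Finsupp.single (Quot.mk ODTree.Rel T) 1) = treeCobracket k T := by
  have hlift : rhoOD k s t = Finsupp.lift _ k (ODT s t) fun q => treeCobracket k q.out := by
    refine congrArg (Finsupp.lift (ODMod k s t ⊗[k] ODMod k s t) k (ODT s t)) (funext fun q => ?_)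
    refine congrArg List.sum (List.map_congr_left fun ⟨b, A, B⟩ _ => ?_)
    cases b <;> rfl
  have hsingle (q : ODT s t) : rhoOD k s t (Finsupp.single q 1) = treeCobracket k q.out := by
    rw [hlift]
    exact finsuppLift_single_one k _ q
  exact (hsingle _).trans
    (apply_out_of_rel (treeCobracket k) (fun _ _ => treeCobracket_rel k) T)

end TreeCobracket

/-! ### Removing a chord from a cut -/

/-- A chord of a word with a cut, as the data left after removing it: the position and the arrow of
its left end, the word with a cut below it, and the word with a cut formed by the other arrows. -/
structure ChordSplit (E : Type*) where
  pos : ℕ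
  arrow : Arr E
  below : CutWord E
  rest : CutWord E

namespace CutWord

/-- Insert at position `p` of a word with a cut a chord with left end `a` and with `G` below it. -/
def insertChord (a : Arr E) (G : CutWord E) : ℕ → CutWord E → CutWord E
  | 0, K => chord a G K
  | _ + 1, nil => nil
  | p + 1, free b K => free b (insertChord a G p K)
  | p + 1, chord b K K' =>
      if p ≤ K.toList.length then chord b (insertChord a G p K) K'
      else chord b K (insertChord a G (p - K.toList.length - 1) K')

/-- All chords of a word with a cut, ordered by their left ends. -/
def splits : CutWord E → List (ChordSplit E)
  | nil => []
  | free b F => F.splits.map fun x => { x with pos := x.pos + 1, rest := free b x.rest }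
  | chord a G F =>
      ⟨0, a, G, F⟩ ::
        (G.splits.map (fun x => { x with pos := x.pos + 1, rest := chord a x.rest F }) ++
          F.splits.map fun x =>
            { x with pos := x.pos + G.toList.length + 2, rest := chord a G x.rest })

end CutWord

namespace ChordSplit

/-- The position of the right end of the chord. -/
def endPos (x : ChordSplit E) : ℕ := x.pos + 1 + x.below.toList.length

/-- The word with a cut in which the chord has been put back. -/
def glue (x : ChordSplit E) : CutWord E := .insertChord x.arrow x.below x.pos x.rest

end ChordSplit

namespace CutWord

lemma toList_insertChord (a : Arr E) (G : CutWord E) {K : CutWord E} {p : ℕ}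
    (hp : p ≤ K.toList.length) :
    (insertChord a G p K).toList =
      K.toList.take p ++ a :: (G.toList ++ astar a :: K.toList.drop p) := by
  induction K generalizing p with
  | nil =>
    obtain rfl : p = 0 := by simpa [toList] using hp
    simp [insertChord, toList]
  | free b K ih =>
    cases p with
    | zero => simp [insertChord, toList]
    | succ p => simp [insertChord, toList, ih (p := p) (by simpa [toList] using hp)]
  | chord b K K' ihK ihK' =>
    cases p with
    | zero => simp [insertChord, toList]
    | succ p =>
      rw [insertChord]
      split_ifs with h
      · simp [toList, ihK h, List.take_append_of_le_length h, List.drop_append_of_le_length h]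
      · obtain ⟨d, rfl⟩ : ∃ d, p = K.toList.length + (d + 1) :=
          ⟨p - K.toList.length - 1, by omega⟩
        have hd : d ≤ K'.toList.length := by
          simp only [toList, List.length_cons, List.length_append] at hp
          omega
        simp [toList, ihK' hd, List.take_append, List.drop_append, List.take_of_length_le]

lemma insertChord_of_mem_splits {F : CutWord E} {x : ChordSplit E} (hx : x ∈ F.splits) :
    x.pos ≤ x.rest.toList.length ∧ x.glue = F := by
  simp only [ChordSplit.glue]
  induction F generalizing x with
  | nil => simp [splits] at hx
  | free b F ih =>
    obtain ⟨y, hy, rfl⟩ := List.mem_map.1 hx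
    simpa [toList, insertChord] using ih hy
  | chord a G F ihG ihF =>
    simp only [splits, List.mem_cons, List.mem_append, List.mem_map] at hx
    rcases hx with rfl | ⟨y, hy, rfl⟩ | ⟨y, hy, rfl⟩
    · simp [insertChord]
    · obtain ⟨hpos, hglue⟩ := ihG hy
      refine ⟨by simp only [toList, List.length_cons, List.length_append]; omega, ?_⟩
      rw [insertChord, if_pos hpos, hglue]
    · obtain ⟨hpos, hglue⟩ := ihF hy
      refine ⟨by simp only [toList, List.length_cons, List.length_append]; omega, ?_⟩
      have hsub : y.pos + G.toList.length + 1 - G.toList.length - 1 = y.pos := by omega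
      rw [insertChord, if_neg (by omega), hsub, hglue]

lemma mem_splits_glue {x : ChordSplit E} (hx : x.pos ≤ x.rest.toList.length) :
    x ∈ x.glue.splits := by
  obtain ⟨p, a, G, K⟩ := x
  simp only [ChordSplit.glue] at hx ⊢
  induction K generalizing p with
  | nil =>
    obtain rfl : p = 0 := by simpa [toList] using hx
    simp [insertChord, splits]
  | free b K ih =>
    cases p with
    | zero => simp [insertChord, splits]
    | succ p => exact List.mem_map.2 ⟨_, ih p (by simpa [toList] using hx), rfl⟩
  | chord b K K' ihK ihK' =>
    cases p with
    | zero => simp [insertChord, splits]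
    | succ p =>
      rw [insertChord]
      split_ifs with h
      · exact List.mem_cons_of_mem _ (List.mem_append_left _ (List.mem_map.2 ⟨_, ihK p h, rfl⟩))
      · have hp : p - K.toList.length - 1 ≤ K'.toList.length := by
          simp only [toList, List.length_cons, List.length_append] at hx
          omega
        refine List.mem_cons_of_mem _ (List.mem_append_right _
          (List.mem_map.2 ⟨_, ihK' _ hp, ?_⟩))
        have hsub : p - K.toList.length - 1 + K.toList.length + 2 = p + 1 := by omega
        rw [hsub]

lemma pairwise_splits (F : CutWord E) : F.splits.Pairwise fun x y => x.pos < y.pos := by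
  induction F with
  | nil => simp [splits]
  | free a F ih => simpa [splits, List.pairwise_map] using ih
  | chord a G F ihG ihF =>
    simp only [splits, List.pairwise_cons, List.pairwise_append, List.pairwise_map,
      List.mem_append, List.mem_map]
    refine ⟨?_, by simpa using ihG, by simpa using ihF, ?_⟩
    · rintro _ (⟨x, -, rfl⟩ | ⟨x, -, rfl⟩) <;> simp
    · rintro _ ⟨x, hx, rfl⟩ _ ⟨y, -, rfl⟩
      obtain ⟨hpos, hglue⟩ := insertChord_of_mem_splits hx
      have hlen := congrArg (fun F => F.toList.length) hglue
      simp only [ChordSplit.glue, toList_insertChord _ _ hpos, List.length_append,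
        List.length_take, List.length_cons, List.length_drop] at hlen
      dsimp only
      omega

lemma nodup_splits (F : CutWord E) : F.splits.Nodup :=
  F.pairwise_splits.imp fun {_ _} h => by rintro rfl; exact lt_irrefl _ h

lemma outerWord_of_mem_splits {F : CutWord E} {x : ChordSplit E} (hx : x ∈ F.splits) :
    x.rest.outerWord = F.outerWord := by
  induction F generalizing x with
  | nil => simp [splits] at hx
  | free b F ih =>
    obtain ⟨y, hy, rfl⟩ := List.mem_map.1 hx
    simp [outerWord, ih hy]
  | chord a G F _ ihF =>
    simp only [splits, List.mem_cons, List.mem_append, List.mem_map] at hx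
    rcases hx with rfl | ⟨y, -, rfl⟩ | ⟨y, hy, rfl⟩
    · rfl
    · rfl
    · simpa only [outerWord] using ihF hy

lemma cutsL_branches (F : CutWord E) :
    ODTree.cutsL (F.branches s t) = F.splits.map fun x =>
      (x.arrow.isLeft, x.below.dualTree s t (atgt s t x.arrow), x.rest.branches s t) := by
  induction F with
  | nil => simp [branches, splits, ODTree.cutsL]
  | free a F ih => simpa [branches, splits, Function.comp_def] using ih
  | chord a G F ihG ihF =>
    simp only [branches, splits, ODTree.cutsL, ODTree.cuts, ihG, ihF, List.map_cons,
      List.map_append, List.map_map, Function.comp_def, dualTree, List.cons_append]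
    congr 2
    refine List.map_congr_left fun x hx => ?_
    rw [outerWord_of_mem_splits hx]

variable {s t} in
lemma treeCobracket_dualTree (v : I) (F : CutWord E) :
    treeCobracket k (F.dualTree s t v) = ∑ x ∈ F.splits.toFinset,
      edgeTerm k x.arrow.isLeft (Quot.mk ODTree.Rel (x.below.dualTree s t (atgt s t x.arrow)))
        (Quot.mk ODTree.Rel (x.rest.dualTree s t v)) := by
  rw [List.sum_toFinset _ F.nodup_splits, treeCobracket, dualTree, ODTree.cuts, cutsL_branches,
    List.map_map, List.map_map]
  refine congrArg List.sum (List.map_congr_left fun x hx => ?_)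
  simp only [Function.comp, dualTree, outerWord_of_mem_splits hx]

/-- The chords of all cuts of the word `l`. -/
def splitsOfWord (l : List (Arr E)) : Finset (ChordSplit E) :=
  (parses l).biUnion fun F => F.splits.toFinset

lemma mem_splitsOfWord {l : List (Arr E)} {x : ChordSplit E} :
    x ∈ splitsOfWord l ↔ x.pos ≤ x.rest.toList.length ∧
      x.rest.toList.take x.pos ++
        x.arrow :: (x.below.toList ++ astar x.arrow :: x.rest.toList.drop x.pos) = l := by
  simp only [splitsOfWord, Finset.mem_biUnion, mem_parses, List.mem_toFinset]
  constructor
  · rintro ⟨F, rfl, hx⟩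
    obtain ⟨hpos, hglue⟩ := insertChord_of_mem_splits hx
    exact ⟨hpos, by rw [← toList_insertChord _ _ hpos, ← hglue, ChordSplit.glue]⟩
  · rintro ⟨hpos, hl⟩
    exact ⟨x.glue, by rw [ChordSplit.glue, toList_insertChord _ _ hpos, hl], mem_splits_glue hpos⟩

lemma sum_parses_sum_splits {M : Type*} [AddCommMonoid M] (l : List (Arr E))
    (f : ChordSplit E → M) :
    ∑ F ∈ parses l, ∑ x ∈ F.splits.toFinset, f x = ∑ x ∈ splitsOfWord l, f x := by
  refine (Finset.sum_biUnion fun F _ F' _ hne => Finset.disjoint_left.2 fun x hx hx' => ?_).symm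
  rw [List.mem_toFinset] at hx hx'
  exact hne ((insertChord_of_mem_splits hx).2.symm.trans (insertChord_of_mem_splits hx').2)

lemma sum_splitsOfWord_eq_sum_endpoints {M : Type*} [AddCommMonoid M] (l : List (Arr E))
    (f : ChordSplit E → M) :
    ∑ x ∈ splitsOfWord l, f x = ∑ i ∈ Finset.range l.length, ∑ j ∈ Finset.range l.length,
      ∑ x ∈ splitsOfWord l with (x.pos, x.endPos) = (i, j), f x := by
  rw [← Finset.sum_product', Finset.sum_fiberwise_of_maps_to (fun x hx => ?_)]
  obtain ⟨hpos, rfl⟩ := mem_splitsOfWord.1 hx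
  simp only [ChordSplit.endPos, List.length_append, List.length_take, List.length_cons,
    List.length_drop, Finset.mem_product, Finset.mem_range]
  omega

end CutWord

/-- The arrows in the positions `i < j` of the word `l` are of the form `a` and `a*`. -/
def IsMatchedPair (l : List (Arr E)) (i j : ℕ) : Prop :=
  ∃ (a : Arr E) (l₁ l₂ l₃ : List (Arr E)), l = l₁ ++ a :: (l₂ ++ astar a :: l₃) ∧
    i = l₁.length ∧ j = l₁.length + 1 + l₂.length

lemma isMatchedPair_of_getElem? {l : List (Arr E)} {i j : ℕ} (hij : i < j) {a : Arr E}
    (hi : l[i]? = some a) (hj : l[j]? = some (astar a)) : IsMatchedPair l i j := by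
  have hil : (l.take i).length = i :=
    List.length_take_of_le (List.getElem?_eq_some_iff.1 hi).1.le
  obtain ⟨hjl, hja⟩ := List.getElem?_eq_some_iff.1 hj
  have hmid : ((l.drop (i + 1)).take (j - (i + 1))).length = j - (i + 1) := by
    rw [List.length_take, List.length_drop]
    omega
  refine ⟨a, l.take i, (l.drop (i + 1)).take (j - (i + 1)), l.drop (j + 1), ?_, hil.symm,
    by omega⟩
  have htail : astar a :: l.drop (j + 1) = (l.drop (i + 1)).drop (j - (i + 1)) := by
    rw [List.drop_drop, Nat.add_sub_cancel' hij, ← hja, List.getElem_cons_drop]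
  obtain ⟨_, hia⟩ := List.getElem?_eq_some_iff.1 hi
  rw [htail, List.take_append_drop, ← hia, List.getElem_cons_drop, List.take_append_drop]

namespace CutWord

lemma filter_splitsOfWord_eq_empty {l : List (Arr E)} {i j : ℕ} (h : ¬ IsMatchedPair l i j) :
    {x ∈ splitsOfWord l | (x.pos, x.endPos) = (i, j)} = ∅ := by
  refine Finset.filter_eq_empty_iff.2 fun {x} hx hij => h ?_
  obtain ⟨hpos, hl⟩ := mem_splitsOfWord.1 hx
  obtain ⟨rfl, rfl⟩ := Prod.mk.inj hij
  exact ⟨_, _, _, _, hl.symm, by simpa using hpos, by simpa [ChordSplit.endPos] using hpos⟩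

lemma mem_filter_splitsOfWord_iff {a : Arr E} {l₁ l₂ l₃ : List (Arr E)} {x : ChordSplit E} :
    x ∈ {x ∈ splitsOfWord (l₁ ++ a :: (l₂ ++ astar a :: l₃)) |
        (x.pos, x.endPos) = (l₁.length, l₁.length + 1 + l₂.length)} ↔
      x.pos = l₁.length ∧ x.arrow = a ∧ x.below.toList = l₂ ∧ x.rest.toList = l₁ ++ l₃ := by
  obtain ⟨p, b, G, K⟩ := x
  rw [Finset.mem_filter, mem_splitsOfWord, Prod.mk.injEq]
  dsimp only [ChordSplit.endPos]
  constructor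
  · rintro ⟨⟨hp, hl⟩, rfl, hG⟩
    obtain ⟨hleft, hl⟩ := List.append_inj hl (by simpa using hp)
    obtain ⟨rfl, hl⟩ := List.cons.inj hl
    obtain ⟨hbelow, hl⟩ := List.append_inj hl (by omega)
    refine ⟨rfl, rfl, hbelow, ?_⟩
    rw [← List.take_append_drop l₁.length K.toList, hleft, (List.cons.inj hl).2]
  · rintro ⟨rfl, rfl, rfl, hK⟩
    simp [hK]

lemma sum_filter_splitsOfWord {M : Type*} [AddCommMonoid M] (a : Arr E)
    (l₁ l₂ l₃ : List (Arr E)) (f : ChordSplit E → M) :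
    ∑ x ∈ splitsOfWord (l₁ ++ a :: (l₂ ++ astar a :: l₃)) with
        (x.pos, x.endPos) = (l₁.length, l₁.length + 1 + l₂.length), f x =
      ∑ G ∈ parses l₂, ∑ K ∈ parses (l₁ ++ l₃), f ⟨l₁.length, a, G, K⟩ := by
  rw [← Finset.sum_product' (parses l₂) (parses (l₁ ++ l₃)) fun G K => f ⟨l₁.length, a, G, K⟩]
  refine Finset.sum_bij' (fun x _ => (x.below, x.rest)) (fun y _ => ⟨l₁.length, a, y.1, y.2⟩)
    (fun x hx => ?_) (fun y hy => ?_) (fun x hx => ?_) (fun _ _ => rfl) (fun x hx => ?_)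
  · obtain ⟨-, -, hx⟩ := mem_filter_splitsOfWord_iff.1 hx
    simpa using hx
  · exact mem_filter_splitsOfWord_iff.2 ⟨rfl, rfl, by simpa using hy⟩
  all_goals
    obtain ⟨p, b, G, K⟩ := x
    obtain ⟨rfl, rfl, -⟩ := mem_filter_splitsOfWord_iff.1 hx
    rfl

end CutWord

/-! ### Compatibility with the cobrackets -/

section Cobracket

variable {s t}

lemma sum_edgeTerm (v w : I) (a : Arr E) (l m : List (Arr E)) :
    ∑ G ∈ CutWord.parses l, ∑ K ∈ CutWord.parses m,
      edgeTerm k a.isLeft (Quot.mk ODTree.Rel (G.dualTree s t w))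
        (Quot.mk ODTree.Rel (K.dualTree s t v)) =
    omg k a (astar a) • wedge k _ (cutSum k s t v m) (cutSum k s t w l) := by
  simp only [cutSum, map_sum, LinearMap.sum_apply, Finset.smul_sum]
  exact Finset.sum_congr rfl fun _ _ => Finset.sum_congr rfl fun _ _ => edgeTerm_isLeft k a _ _

lemma dorTerm_append (v : I) (a : Arr E) (l₁ l₂ l₃ : List (Arr E)) :
    dorTerm k s t v (l₁ ++ a :: (l₂ ++ astar a :: l₃)) l₁.length (l₁.length + 1 + l₂.length) =
      omg k a (astar a) • wedge k _ (mkN k s t (asrc s t a) (l₃ ++ l₁))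
        (mkN k s t (atgt s t a) l₂) := by
  have hi : (l₁ ++ a :: (l₂ ++ astar a :: l₃))[l₁.length]? = some a := by simp
  have hj : (l₁ ++ a :: (l₂ ++ astar a :: l₃))[l₁.length + 1 + l₂.length]? = some (astar a) := by
    simp [Nat.add_assoc, Nat.add_comm 1]
  have hi' : (l₁ ++ a :: (l₂ ++ astar a :: l₃)).drop (l₁.length + 1) = l₂ ++ astar a :: l₃ := by
    rw [List.drop_length_add_append, List.drop_one, List.tail_cons]
  have hj' : (l₁ ++ a :: (l₂ ++ astar a :: l₃)).drop (l₁.length + 1 + l₂.length + 1) = l₃ := by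
    rw [Nat.add_assoc _ l₂.length, ← List.drop_drop, hi', List.drop_length_add_append,
      List.drop_one, List.tail_cons]
  have hlen : l₁.length + 1 + l₂.length - l₁.length - 1 = l₂.length := by omega
  simp only [dorTerm, hi, hj, hi', hj', hlen, List.take_left, atgt_astar, wedge_apply]

lemma dorTerm_eq_zero (v : I) {l : List (Arr E)} {i j : ℕ} (hij : i < j)
    (h : ¬ IsMatchedPair l i j) : dorTerm k s t v l i j = 0 := by
  rw [dorTerm]
  split
  next a b hi hj =>
    have hb : b ≠ astar a := by
      rintro rfl
      exact h (isMatchedPair_of_getElem? hij hi hj)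
    rw [omg_eq_zero k hb, zero_smul]
  next => exact zero_smul _ _

lemma map_etaOr_dorTerm {v : I} {a : Arr E} {l₁ l₂ l₃ : List (Arr E)}
    (h : IsLoop s t v (l₁ ++ a :: (l₂ ++ astar a :: l₃))) :
    TensorProduct.map (etaOr k s t) (etaOr k s t)
      (dorTerm k s t v (l₁ ++ a :: (l₂ ++ astar a :: l₃)) l₁.length (l₁.length + 1 + l₂.length)) =
    omg k a (astar a) • wedge k _ (cutSum k s t v (l₁ ++ l₃)) (cutSum k s t (atgt s t a) l₂) := by
  obtain ⟨houter, hinner, hsrc⟩ := isLoop_append_cons_append_cons_iff.1 h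
  rw [dorTerm_append, map_smul, map_wedge, etaOr_mkN k hinner, ← hsrc,
    etaOr_mkN k houter.append_comm, cutSum_append_comm k houter]

lemma exists_isLoop_deltaOr_single (q : Necklace s t) :
    ∃ v l, IsLoop s t v l ∧ q = mkNk s t v l ∧
      deltaOr k s t (Finsupp.single q 1) = ∑ i ∈ Finset.range l.length,
        ∑ j ∈ Finset.range l.length, if i < j then dorTerm k s t v l i j else 0 := by
  have h : IsLoop s t q.out.path.src q.out.path.arrows := ⟨q.out.path.valid, q.out.closed⟩
  refine ⟨_, _, h, (Quot.out_eq q).symm.trans (mkNk_of_isLoop h).symm, ?_⟩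
  refine (finsuppLift_single_one k _ q).trans ?_
  refine Finset.sum_congr rfl fun i _ => Finset.sum_congr rfl fun j _ => ?_
  split_ifs
  exacts [rfl, zero_smul k _]

lemma rhoOD_cutSum {v : I} {l : List (Arr E)} (h : IsLoop s t v l) :
    rhoOD k s t (cutSum k s t v l) = TensorProduct.map (etaOr k s t) (etaOr k s t)
      (∑ i ∈ Finset.range l.length, ∑ j ∈ Finset.range l.length,
        if i < j then dorTerm k s t v l i j else 0) := by
  simp only [cutSum, map_sum, rhoOD_single_mk, CutWord.treeCobracket_dualTree]
  rw [CutWord.sum_parses_sum_splits, CutWord.sum_splitsOfWord_eq_sum_endpoints]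
  refine Finset.sum_congr rfl fun i _ => Finset.sum_congr rfl fun j _ => ?_
  by_cases hij : IsMatchedPair l i j
  · obtain ⟨a, l₁, l₂, l₃, rfl, rfl, rfl⟩ := hij
    rw [CutWord.sum_filter_splitsOfWord, if_pos (by omega), map_etaOr_dorTerm k h]
    exact sum_edgeTerm k v (atgt s t a) a l₂ (l₁ ++ l₃)
  · rw [CutWord.filter_splitsOfWord_eq_empty hij, Finset.sum_empty]
    split_ifs with hlt
    · rw [dorTerm_eq_zero k v hlt hij, map_zero]
    · rw [map_zero]

end Cobracket

/-- `η_or` is an injective homomorphism of Lie coalgebras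
`(L, δ_or) → (T_or(Φ_or), ρ^ss_O)`. -/
theorem etaOr_injective_lie_hom :
    Function.Injective (etaOr k s t) ∧
    TensorProduct.map (etaOr k s t) (etaOr k s t) ∘ₗ deltaOr k s t =
      rhoOD k s t ∘ₗ etaOr k s t := by
  refine ⟨etaOr_injective k s t, Finsupp.lhom_ext' fun q => LinearMap.ext_ring ?_⟩
  obtain ⟨v, l, h, rfl, hδ⟩ := exists_isLoop_deltaOr_single k q
  simp only [LinearMap.comp_apply, Finsupp.lsingle_apply]
  rw [hδ, etaOr_single_mkNk k h, rhoOD_cutSum k h]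

end
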